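/- Q(2) = {α ∈ reg(T) : |Aα| = 1 for every E-class A} is the smallest two-sided ideal of reg(T): Q(2) is nonempty, αβ ∈ Q(2) and βα ∈ Q(2) for all α ∈ Q(2) and β ∈ reg(T), and Q(2) ⊆ J for every two-sided ideal J of reg(T). Consequently Q(2) is the unique minimal ideal (the kernel) of reg(T). -/

import Mathlib

universe u

/-- The semigroup `T_{E*}(X)` of maps preserving `E` in both directions. -/
def TEstar {X : Type u} (E : Setoid X) : Set (X → X) :=
  {α | ∀ x y : X, E.r x y ↔ E.r (α x) (α y)}

/-- The `E`-class of `x`. -/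
def cls {X : Type u} (E : Setoid X) (x : X) : Set X := {y | E.r x y}

/-- The regular part `reg(T)` of `T_{E*}(X)`: every `E`-class meets the range. -/
def regT {X : Type u} (E : Setoid X) : Set (X → X) :=
  {α | α ∈ TEstar E ∧ ∀ x : X, (cls E x ∩ Set.range α).Nonempty}

/-- The kernel `Q(2)` of `reg(T)`: every `E`-class has a one-point image. -/
def Q2 {X : Type u} (E : Setoid X) : Set (X → X) :=
  {α | α ∈ regT E ∧ ∀ x : X, ∃ y : X, α '' cls E x = {y}}

/-!
Each element of `reg(T)` permutes the `E`-classes, so `α ∈ reg(T)` has an inverse `δ ∈ reg(T)` up to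
`E`: the point `α (δ x)` lies in the class of `x`. Since a map `γ ∈ Q(2)` depends only on the class
of its argument, `γ ∘ (α ∘ δ) = γ`, and thus `γ` lies in every ideal containing `α`.
-/

section

variable {X : Type u} {E : Setoid X}

theorem mem_regT_iff {α : X → X} :
    α ∈ regT E ↔ (∀ x y, E x y ↔ E (α x) (α y)) ∧ ∀ x, ∃ z, E x (α z) :=
  and_congr Iff.rfl (forall_congr' fun _ => Set.inter_nonempty.trans <|
    ⟨fun ⟨_, hxy, z, hz⟩ => ⟨z, hz ▸ hxy⟩, fun ⟨z, hxz⟩ => ⟨α z, hxz, z, rfl⟩⟩)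

theorem exists_image_cls_eq_singleton_iff {Y : Type*} {f : X → Y} {x : X} :
    (∃ y, f '' cls E x = {y}) ↔ ∀ z, E x z → f x = f z := by
  have hx : x ∈ cls E x := E.refl x
  constructor
  · rintro ⟨y, hy⟩ z hz
    have h : ∀ w ∈ cls E x, f w = y := fun w hw => hy.subset (Set.mem_image_of_mem f hw)
    exact (h x hx).trans (h z hz).symm
  · intro h
    refine ⟨f x, Set.eq_singleton_iff_unique_mem.2 ⟨Set.mem_image_of_mem f hx, ?_⟩⟩
    rintro _ ⟨z, hz, rfl⟩
    exact (h z hz).symm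

theorem mem_Q2_iff {α : X → X} :
    α ∈ Q2 E ↔ α ∈ regT E ∧ ∀ x y, E x y → α x = α y :=
  and_congr_right' (forall_congr' fun _ => exists_image_cls_eq_singleton_iff)

theorem comp_mem_regT {α β : X → X} (hβ : β ∈ regT E) (hα : α ∈ regT E) : β ∘ α ∈ regT E := by
  obtain ⟨hα_rel, hα_meets⟩ := mem_regT_iff.1 hα
  obtain ⟨hβ_rel, hβ_meets⟩ := mem_regT_iff.1 hβ
  refine mem_regT_iff.2 ⟨fun x y => (hα_rel x y).trans (hβ_rel _ _), fun x => ?_⟩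
  obtain ⟨y, hxy⟩ := hβ_meets x
  obtain ⟨z, hyz⟩ := hα_meets y
  exact ⟨z, E.trans hxy ((hβ_rel _ _).1 hyz)⟩

theorem comp_mem_Q2_of_mem_regT_left {α β : X → X} (hβ : β ∈ regT E) (hα : α ∈ Q2 E) :
    β ∘ α ∈ Q2 E := by
  obtain ⟨hα_reg, hα_const⟩ := mem_Q2_iff.1 hα
  exact mem_Q2_iff.2
    ⟨comp_mem_regT hβ hα_reg, fun x y hxy => congrArg β (hα_const x y hxy)⟩

theorem comp_mem_Q2_of_mem_regT_right {α β : X → X} (hα : α ∈ Q2 E) (hβ : β ∈ regT E) :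
    α ∘ β ∈ Q2 E := by
  obtain ⟨hα_reg, hα_const⟩ := mem_Q2_iff.1 hα
  exact mem_Q2_iff.2
    ⟨comp_mem_regT hα_reg hβ, fun x y hxy => hα_const _ _ ((hβ.1 x y).1 hxy)⟩

theorem mem_regT_of_forall_rel_self {ρ : X → X} (hρ : ∀ x, E (ρ x) x) : ρ ∈ regT E :=
  mem_regT_iff.2
    ⟨fun x y => ⟨fun h => E.trans (hρ x) (E.trans h (E.symm (hρ y))),
      fun h => E.trans (E.symm (hρ x)) (E.trans h (hρ y))⟩,
      fun x => ⟨x, E.symm (hρ x)⟩⟩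

variable (E) in
theorem Q2_nonempty : (Q2 E).Nonempty :=
  ⟨fun x => (Quotient.mk E x).out, mem_Q2_iff.2
    ⟨mem_regT_of_forall_rel_self fun x => Quotient.mk_out x,
      fun _ _ hxy => congrArg Quotient.out (Quotient.sound hxy)⟩⟩

theorem exists_mem_regT_forall_rel_apply_apply {α : X → X} (hα : α ∈ regT E) :
    ∃ δ ∈ regT E, ∀ x, E (α (δ x)) x := by
  obtain ⟨hα_rel, hα_meets⟩ := mem_regT_iff.1 hα
  choose δ hδ using hα_meets
  have hαδ : α ∘ δ ∈ regT E := mem_regT_of_forall_rel_self fun x => E.symm (hδ x)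
  have hδ_rel : ∀ x y, E x y ↔ E (δ x) (δ y) := fun x y =>
    (hαδ.1 x y).trans (hα_rel (δ x) (δ y)).symm
  have hδ_meets : ∀ x, E x (δ (α x)) := fun x => (hα_rel x _).2 (hδ (α x))
  exact ⟨δ, mem_regT_iff.2 ⟨hδ_rel, fun x => ⟨α x, hδ_meets x⟩⟩, fun x => E.symm (hδ x)⟩

theorem exists_mem_regT_comp_comp_eq {α γ : X → X} (hα : α ∈ regT E) (hγ : γ ∈ Q2 E) :
    ∃ δ ∈ regT E, γ ∘ (α ∘ δ) = γ := by
  obtain ⟨δ, hδ, hαδ⟩ := exists_mem_regT_forall_rel_apply_apply hα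
  exact ⟨δ, hδ, funext fun x => (mem_Q2_iff.1 hγ).2 _ _ (hαδ x)⟩

end

/-- `Q(2)` is the smallest (hence the unique minimal) two-sided ideal of `reg(T)`. -/
theorem stmt12 {X : Type u} [Nonempty X] (E : Setoid X) :
    (Q2 E).Nonempty ∧
    (∀ α ∈ Q2 E, ∀ β ∈ regT E, β ∘ α ∈ Q2 E ∧ α ∘ β ∈ Q2 E) ∧
    (∀ J : Set (X → X), J.Nonempty → J ⊆ regT E →
      (∀ α ∈ J, ∀ β ∈ regT E, β ∘ α ∈ J ∧ α ∘ β ∈ J) → Q2 E ⊆ J) := by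
  refine ⟨Q2_nonempty E, fun α hα β hβ =>
    ⟨comp_mem_Q2_of_mem_regT_left hβ hα, comp_mem_Q2_of_mem_regT_right hα hβ⟩, ?_⟩
  rintro J ⟨α, hαJ⟩ hJ hideal γ hγ
  obtain ⟨δ, hδ, hγαδ⟩ := exists_mem_regT_comp_comp_eq (hJ hαJ) hγ
  have hαδJ : α ∘ δ ∈ J := (hideal α hαJ δ hδ).2
  exact hγαδ ▸ (hideal (α ∘ δ) hαδJ γ hγ.1).1
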